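/- Let x, xb, xne, xnw, xse, xsw, d, ne, nw, se, sw be real numbers each of absolute value strictly less than 1, and let M be the 11×11 real matrix whose nonzero entries are (using 1-based indexing): M[1,2]=1, M[1,3]=2, M[1,4]=1; M[2,2]=x, M[2,3]=xb, M[2,8]=xne, M[2,9]=xnw, M[2,10]=xse, M[2,11]=xsw; M[3,5]=1; M[4,3]=1, M[4,4]=d; M[5,6]=1; M[6,7]=1; M[8,8]=ne; M[9,9]=nw; M[10,10]=se; M[11,11]=sw (row 7 is identically zero). Then the matrix powers M^k converge to the zero matrix (entrywise) as k → ∞. -/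

import Mathlib

/-!
Exchanging the third and fourth nonterminals makes the matrix upper triangular. Working up from
the last row, an entry `u k` of the `k`-th power satisfies `u (k + 1) = a * u k + v k`, where `a` is
the diagonal entry of its row and `v k` is a combination of entries of later rows, which already
tend to `0`; as `‖a‖ < 1`, so does `u`.
-/

open Filter Topology

theorem tendsto_zero_of_succ_le_mul_add {r : ℝ} (hr₀ : 0 ≤ r) (hr₁ : r < 1) {u v : ℕ → ℝ}
    (hu : ∀ k, 0 ≤ u k) (huv : ∀ k, u (k + 1) ≤ r * u k + v k) (hv : Tendsto v atTop (𝓝 0)) :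
    Tendsto u atTop (𝓝 0) := by
  refine tendsto_order.2 ⟨fun ε hε ↦ .of_forall fun k ↦ hε.trans_le (hu k), fun ε hε ↦ ?_⟩
  obtain ⟨N, hN⟩ : ∃ N, ∀ k ≥ N, v k < (1 - r) * (ε / 2) :=
    eventually_atTop.1 (hv.eventually_lt_const (mul_pos (sub_pos.2 hr₁) (half_pos hε)))
  -- `ε / 2` is the fixed point of `t ↦ r * t + (1 - r) * (ε / 2)`.
  have contract (m : ℕ) : u (m + 1 + N) - ε / 2 ≤ r * (u (m + N) - ε / 2) := by
    have hstep := huv (m + N)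
    rw [add_right_comm] at hstep
    linarith [hN (m + N) (Nat.le_add_left N m)]
  have geom (m : ℕ) : u (m + N) - ε / 2 ≤ r ^ m * (u N - ε / 2) := by
    simpa only [zero_add] using
      le_geom (u := fun m ↦ u (m + N) - ε / 2) hr₀ m fun k _ ↦ contract k
  have decay : Tendsto (fun m : ℕ ↦ r ^ m * (u N - ε / 2)) atTop (𝓝 0) := by
    simpa using (tendsto_pow_atTop_nhds_zero_of_lt_one hr₀ hr₁).mul_const (u N - ε / 2)
  rw [← map_add_atTop_eq_nat N, eventually_map]
  filter_upwards [decay.eventually_lt_const (half_pos hε)] with m hm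
  linarith [geom m]

theorem tendsto_zero_of_succ_eq_mul_add {R : Type*} [SeminormedRing R] {a : R} (ha : ‖a‖ < 1)
    {u v : ℕ → R} (huv : ∀ k, u (k + 1) = a * u k + v k) (hv : Tendsto v atTop (𝓝 0)) :
    Tendsto u atTop (𝓝 0) := by
  refine tendsto_zero_iff_norm_tendsto_zero.2 <|
    tendsto_zero_of_succ_le_mul_add (norm_nonneg a) ha (fun _ ↦ norm_nonneg _) (fun k ↦ ?_)
      (tendsto_zero_iff_norm_tendsto_zero.1 hv)
  rw [huv]
  exact (norm_add_le _ _).trans (by gcongr; exact norm_mul_le _ _)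

theorem tendsto_pow_zero_of_blockTriangular {R n α : Type*} [SeminormedRing R] [Fintype n]
    [DecidableEq n] [LinearOrder α] {M : Matrix n n R} {b : n → α} (hM : M.BlockTriangular b)
    (hb : Function.Injective b) (hdiag : ∀ i, ‖M i i‖ < 1) :
    Tendsto (fun k : ℕ ↦ M ^ k) atTop (𝓝 0) := by
  refine tendsto_pi_nhds.2 fun i ↦ tendsto_pi_nhds.2 fun j ↦ ?_
  induction i using (Finite.wellFounded_of_trans_of_irrefl (b ⁻¹'o (· > ·))).induction with
  | _ i later_rows =>
  have recursion (k : ℕ) : (M ^ (k + 1)) i j =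
      M i i * (M ^ k) i j + ∑ l ∈ Finset.univ.erase i, M i l * (M ^ k) l j := by
    rw [pow_succ', Matrix.mul_apply,
      Finset.add_sum_erase _ (fun l ↦ M i l * (M ^ k) l j) (Finset.mem_univ i)]
  refine tendsto_zero_of_succ_eq_mul_add (hdiag i) recursion ?_
  rw [← Finset.sum_const_zero (s := Finset.univ.erase i)]
  refine tendsto_finsetSum _ fun l hl ↦ ?_
  rcases lt_or_gt_of_ne (hb.ne (Finset.ne_of_mem_erase hl)) with hlt | hgt
  · simpa only [hM hlt, zero_mul] using tendsto_const_nhds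
  · simpa using (later_rows l hgt).const_mul (M i l)

/-- The mean matrix (21) of the branching process of the grammar for `G^asym`: the entry `(i, j)` is
the expected number of copies of nonterminal `j` produced by rewriting nonterminal `i`. Indices
start at `0`, and the parameters range over an arbitrary semiring. -/
def asymSearchMeanMatrix {R : Type*} [Semiring R] (x xb xne xnw xse xsw d ne nw se sw : R) :
    Matrix (Fin 11) (Fin 11) R :=
  .of
    ![![0, 1, 2, 1, 0, 0, 0, 0, 0, 0, 0],
      ![0, x, xb, 0, 0, 0, 0, xne, xnw, xse, xsw],
      ![0, 0, 0, 0, 1, 0, 0, 0, 0, 0, 0],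
      ![0, 0, 1, d, 0, 0, 0, 0, 0, 0, 0],
      ![0, 0, 0, 0, 0, 1, 0, 0, 0, 0, 0],
      ![0, 0, 0, 0, 0, 0, 1, 0, 0, 0, 0],
      ![0, 0, 0, 0, 0, 0, 0, 0, 0, 0, 0],
      ![0, 0, 0, 0, 0, 0, 0, ne, 0, 0, 0],
      ![0, 0, 0, 0, 0, 0, 0, 0, nw, 0, 0],
      ![0, 0, 0, 0, 0, 0, 0, 0, 0, se, 0],
      ![0, 0, 0, 0, 0, 0, 0, 0, 0, 0, sw]]

theorem blockTriangular_asymSearchMeanMatrix {R : Type*} [Semiring R]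
    (x xb xne xnw xse xsw d ne nw se sw : R) :
    (asymSearchMeanMatrix x xb xne xnw xse xsw d ne nw se sw).BlockTriangular
      (Equiv.swap (2 : Fin 11) 3) := by
  intro i j hij
  fin_cases i <;> fin_cases j <;> first | rfl | exact absurd hij (by decide)

theorem pow_tendsto_zero_of_asym_search_mean_matrix_general {R : Type*} [SeminormedRing R]
    {x d ne nw se sw : R} (xb xne xnw xse xsw : R) (hx : ‖x‖ < 1) (hd : ‖d‖ < 1)
    (hne : ‖ne‖ < 1) (hnw : ‖nw‖ < 1) (hse : ‖se‖ < 1) (hsw : ‖sw‖ < 1) :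
    Tendsto (fun k : ℕ ↦ asymSearchMeanMatrix x xb xne xnw xse xsw d ne nw se sw ^ k) atTop
      (𝓝 0) := by
  refine tendsto_pow_zero_of_blockTriangular (blockTriangular_asymSearchMeanMatrix ..)
    (Equiv.injective _) fun i ↦ ?_
  fin_cases i <;> simp [asymSearchMeanMatrix, hx, hd, hne, hnw, hse, hsw]

theorem pow_tendsto_zero_of_asym_search_mean_matrix
    (x xb xne xnw xse xsw d ne nw se sw : ℝ)
    (hx : |x| < 1) (hxb : |xb| < 1) (hxne : |xne| < 1) (hxnw : |xnw| < 1)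
    (hxse : |xse| < 1) (hxsw : |xsw| < 1) (hd : |d| < 1) (hne : |ne| < 1)
    (hnw : |nw| < 1) (hse : |se| < 1) (hsw : |sw| < 1) :
    Filter.Tendsto
      (fun k : ℕ =>
        (Matrix.of
          ![![0, 1, 2, 1, 0, 0, 0, 0, 0, 0, 0],
            ![0, x, xb, 0, 0, 0, 0, xne, xnw, xse, xsw],
            ![0, 0, 0, 0, 1, 0, 0, 0, 0, 0, 0],
            ![0, 0, 1, d, 0, 0, 0, 0, 0, 0, 0],
            ![0, 0, 0, 0, 0, 1, 0, 0, 0, 0, 0],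
            ![0, 0, 0, 0, 0, 0, 1, 0, 0, 0, 0],
            ![0, 0, 0, 0, 0, 0, 0, 0, 0, 0, 0],
            ![0, 0, 0, 0, 0, 0, 0, ne, 0, 0, 0],
            ![0, 0, 0, 0, 0, 0, 0, 0, nw, 0, 0],
            ![0, 0, 0, 0, 0, 0, 0, 0, 0, se, 0],
            ![0, 0, 0, 0, 0, 0, 0, 0, 0, 0, sw]] :
          Matrix (Fin 11) (Fin 11) ℝ) ^ k)
      Filter.atTop (nhds 0) :=
  pow_tendsto_zero_of_asym_search_mean_matrix_general xb xne xnw xse xsw hx hd hne hnw hse hsw
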